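/- arXiv:2505.12760 — 2 statements merged into one kernel-verified Lean document; each statement's English description precedes it below -/
import Mathlib

section
/- Let $1<\alpha,\beta<\infty$, $0<p\leqslant q<\infty$, and $0\leqslant r<1$. If for every function $f$ analytic on the open unit disk $\mathbb{D}$ one has $\|T_r f\|_{A_\beta^q(\mathbb{D})}\leqslant\|f\|_{A_\alpha^p(\mathbb{D})}$, then $r^2\leqslant \beta p/(\alpha q)$. -/
open MeasureTheory Metric

/-- The weighted Bergman measure `dA_α(z) = (α-1)(1-|z|²)^(α-2) dA(z)` on the unit disk,
where `dA = dx dy / π` is the normalized area measure. -/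
noncomputable def bergmanMeasure (α : ℝ) : Measure ℂ :=
  ((volume : Measure ℂ).restrict (ball (0 : ℂ) 1)).withDensity
    fun z => ENNReal.ofReal ((α - 1) * (1 - ‖z‖ ^ 2) ^ (α - 2) / Real.pi)

/-- The radial primitive `-(1 - y²)^(s+1) / (2(s+1))` gives the integral of `y (1 - y²)^s`. -/
theorem integrableOn_and_integral_mul_one_sub_sq_rpow {s : ℝ} (hs : -1 < s) :
    IntegrableOn (fun y : ℝ => y * (1 - y ^ 2) ^ s) (Set.Ioc 0 1) ∧
      ∫ y in Set.Ioc (0 : ℝ) 1, y * (1 - y ^ 2) ^ s = 1 / (2 * (s + 1)) := by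
  have hs' : 0 < s + 1 := by linarith
  have hcont : ContinuousOn (fun y : ℝ => -(1 - y ^ 2) ^ (s + 1) / (2 * (s + 1)))
      (Set.Icc 0 1) := by
    refine ContinuousOn.div_const (ContinuousOn.neg ?_) _
    exact ContinuousOn.rpow_const (by fun_prop) fun x _ => Or.inr hs'.le
  have hderiv : ∀ x ∈ Set.Ioo (0 : ℝ) 1,
      HasDerivAt (fun y : ℝ => -(1 - y ^ 2) ^ (s + 1) / (2 * (s + 1)))
        (x * (1 - x ^ 2) ^ s) x := by
    intro x hx
    have hx1 : 0 < 1 - x ^ 2 := by nlinarith [hx.1, hx.2]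
    have h1 : HasDerivAt (fun y : ℝ => 1 - y ^ 2) (-(2 * x)) x := by
      simpa using (hasDerivAt_pow 2 x).const_sub 1
    have h2 := ((h1.rpow_const (p := s + 1) (Or.inl hx1.ne')).neg).div_const (2 * (s + 1))
    refine h2.congr_deriv ?_
    rw [add_sub_cancel_right]
    field_simp
  have hint := intervalIntegral.integrableOn_deriv_of_nonneg hcont hderiv fun x hx =>
    mul_nonneg hx.1.le (Real.rpow_nonneg (by nlinarith [hx.1, hx.2]) _)
  refine ⟨hint, ?_⟩
  rw [← intervalIntegral.integral_of_le zero_le_one,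
    intervalIntegral.integral_eq_sub_of_hasDerivAt_of_le zero_le_one hcont hderiv
      ((intervalIntegrable_iff_integrableOn_Ioc_of_le zero_le_one).2 hint)]
  simp [Real.zero_rpow hs'.ne', neg_div]

theorem integrableOn_ball_one_sub_norm_sq_rpow {s : ℝ} (hs : -1 < s) :
    IntegrableOn (fun z : ℂ => (1 - ‖z‖ ^ 2) ^ s) (ball 0 1) := by
  rw [integrableOn_fun_norm_addHaar volume (f := fun y : ℝ => (1 - y ^ 2) ^ s)]
  simpa using (integrableOn_and_integral_mul_one_sub_sq_rpow hs).1.mono_set Set.Ioo_subset_Ioc_self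

theorem setIntegral_ball_one_sub_norm_sq_rpow {s : ℝ} (hs : -1 < s) :
    ∫ z in ball (0 : ℂ) 1, (1 - ‖z‖ ^ 2) ^ s = Real.pi / (s + 1) := by
  have h1 : ∫ z in ball (0 : ℂ) 1, (1 - ‖z‖ ^ 2) ^ s =
      ∫ z : ℂ, (Set.Iio (1 : ℝ)).indicator (fun y => (1 - y ^ 2) ^ s) ‖z‖ := by
    rw [← integral_indicator measurableSet_ball]
    congr 1 with z
    simp [Set.indicator]
  have h2 : ∫ y in Set.Ioi (0 : ℝ),
      y * (Set.Iio (1 : ℝ)).indicator (fun y => (1 - y ^ 2) ^ s) y = 1 / (2 * (s + 1)) := by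
    rw [← (integrableOn_and_integral_mul_one_sub_sq_rpow hs).2, integral_Ioc_eq_integral_Ioo,
      ← Set.Ioi_inter_Iio, ← setIntegral_indicator measurableSet_Iio]
    congr 1 with y
    simp [Set.indicator]
  have hs' : s + 1 ≠ 0 := by linarith
  rw [h1, integral_fun_norm_addHaar]
  simp only [Complex.finrank_real_complex, Measure.real, Complex.volume_ball]
  simp [h2]
  field_simp

theorem measurable_bergmanDensity (α : ℝ) :
    Measurable fun z : ℂ => ENNReal.ofReal ((α - 1) * (1 - ‖z‖ ^ 2) ^ (α - 2) / Real.pi) := by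
  fun_prop

theorem bergmanDensity_nonneg {α : ℝ} (hα : 1 < α) {z : ℂ} (hz : z ∈ ball (0 : ℂ) 1) :
    0 ≤ (α - 1) * (1 - ‖z‖ ^ 2) ^ (α - 2) / Real.pi := by
  have hz' : ‖z‖ < 1 := by simpa using hz
  have h1 : 0 ≤ 1 - ‖z‖ ^ 2 := by nlinarith [norm_nonneg z]
  have h2 : 0 ≤ α - 1 := by linarith
  positivity

theorem integral_bergmanMeasure {α : ℝ} (hα : 1 < α) (g : ℂ → ℝ) :
    ∫ z, g z ∂(bergmanMeasure α) =
      ∫ z in ball (0 : ℂ) 1, (α - 1) * (1 - ‖z‖ ^ 2) ^ (α - 2) / Real.pi * g z := by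
  rw [bergmanMeasure, integral_withDensity_eq_integral_toReal_smul
    (measurable_bergmanDensity α) (by simp)]
  refine setIntegral_congr_fun measurableSet_ball fun z hz => ?_
  simp only [smul_eq_mul, ENNReal.toReal_ofReal (bergmanDensity_nonneg hα hz)]

theorem isProbabilityMeasure_bergmanMeasure {α : ℝ} (hα : 1 < α) :
    IsProbabilityMeasure (bergmanMeasure α) := by
  constructor
  have hs : -1 < α - 2 := by linarith
  have hα' : α - 1 ≠ 0 := by linarith
  rw [bergmanMeasure, withDensity_apply _ MeasurableSet.univ, Measure.restrict_univ,
    ← ofReal_integral_eq_lintegral_ofReal]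
  · rw [integral_div, integral_const_mul, setIntegral_ball_one_sub_norm_sq_rpow hs,
      show α - 2 + 1 = α - 1 by ring]
    rw [← ENNReal.ofReal_one]
    congr 1
    field_simp
  · exact ((integrableOn_ball_one_sub_norm_sq_rpow hs).const_mul _).div_const _
  · filter_upwards [ae_restrict_mem measurableSet_ball] with z hz
    exact bergmanDensity_nonneg hα hz

theorem ae_bergmanMeasure_mem_ball (α : ℝ) : ∀ᵐ z ∂(bergmanMeasure α), z ∈ ball (0 : ℂ) 1 :=
  (withDensity_absolutelyContinuous _ _).ae_le (ae_restrict_mem measurableSet_ball)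

theorem integrable_bergmanMeasure_of_continuous {α : ℝ} (hα : 1 < α) {g : ℂ → ℝ}
    (hg : Continuous g) : Integrable g (bergmanMeasure α) := by
  have := isProbabilityMeasure_bergmanMeasure hα
  obtain ⟨C, hC⟩ := (isCompact_closedBall (0 : ℂ) 1).exists_bound_of_continuousOn hg.continuousOn
  refine Integrable.of_bound hg.aestronglyMeasurable C ?_
  filter_upwards [ae_bergmanMeasure_mem_ball α] with z hz
  exact hC z (ball_subset_closedBall hz)

theorem integral_bergmanMeasure_comp_isometry {α : ℝ} (hα : 1 < α) (L : ℂ ≃ₗᵢ[ℝ] ℂ)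
    (g : ℂ → ℝ) :
    ∫ z, g (L z) ∂(bergmanMeasure α) = ∫ z, g z ∂(bergmanMeasure α) := by
  rw [integral_bergmanMeasure hα, integral_bergmanMeasure hα]
  simpa using L.measurePreserving.setIntegral_preimage_emb L.toHomeomorph.measurableEmbedding
    (fun z => (α - 1) * (1 - ‖z‖ ^ 2) ^ (α - 2) / Real.pi * g z) (ball 0 1)

theorem integral_bergmanMeasure_norm_sq {α : ℝ} (hα : 1 < α) :
    ∫ z, ‖z‖ ^ 2 ∂(bergmanMeasure α) = 1 / α := by
  have := isProbabilityMeasure_bergmanMeasure hα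
  have h : ∫ z, (1 - ‖z‖ ^ 2) ∂(bergmanMeasure α) = (α - 1) / α := by
    rw [integral_bergmanMeasure hα]
    have h1 : ∫ z in ball (0 : ℂ) 1,
        (α - 1) * (1 - ‖z‖ ^ 2) ^ (α - 2) / Real.pi * (1 - ‖z‖ ^ 2) =
        ∫ z in ball (0 : ℂ) 1, (α - 1) / Real.pi * (1 - ‖z‖ ^ 2) ^ (α - 1) := by
      refine setIntegral_congr_fun measurableSet_ball fun z hz => ?_
      have hz' : ‖z‖ < 1 := by simpa using hz
      have hpos : 0 < 1 - ‖z‖ ^ 2 := by nlinarith [norm_nonneg z]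
      have : (1 - ‖z‖ ^ 2) ^ (α - 1) = (1 - ‖z‖ ^ 2) ^ (α - 2) * (1 - ‖z‖ ^ 2) := by
        rw [← Real.rpow_add_one hpos.ne']
        congr 1
        ring
      simp only [this]
      ring
    rw [h1, integral_const_mul, setIntegral_ball_one_sub_norm_sq_rpow (by linarith),
      sub_add_cancel]
    field_simp
  rw [integral_sub (integrable_const _)
    (integrable_bergmanMeasure_of_continuous hα (by fun_prop))] at h
  simp only [integral_const, probReal_univ, smul_eq_mul, mul_one] at h
  have h3 : (α - 1) / α = 1 - 1 / α := by field_simp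
  linarith

theorem integral_bergmanMeasure_re_sq {α : ℝ} (hα : 1 < α) :
    ∫ z : ℂ, z.re ^ 2 ∂(bergmanMeasure α) = 1 / (2 * α) := by
  have h1 : ∫ z : ℂ, z.im ^ 2 ∂(bergmanMeasure α) = ∫ z : ℂ, z.re ^ 2 ∂(bergmanMeasure α) := by
    have hI : (Circle.exp (Real.pi / 2) : ℂ) = Complex.I := by
      rw [Circle.coe_exp]
      push_cast
      exact Complex.exp_pi_div_two_mul_I
    rw [← integral_bergmanMeasure_comp_isometry hα (rotation (Circle.exp (Real.pi / 2)))
      fun z => z.re ^ 2]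
    refine integral_congr_ae (Filter.Eventually.of_forall fun z => ?_)
    simp only [rotation_apply, hI, Complex.I_mul_re]
    ring
  have h2 := integral_bergmanMeasure_norm_sq hα
  have h3 : ∀ z : ℂ, ‖z‖ ^ 2 = z.re ^ 2 + z.im ^ 2 := fun z => by
    rw [Complex.sq_norm, Complex.normSq_apply]
    ring
  simp only [h3] at h2
  rw [integral_add (integrable_bergmanMeasure_of_continuous hα (by fun_prop))
    (integrable_bergmanMeasure_of_continuous hα (by fun_prop)), h1] at h2
  have h4 : 1 / α = 2 * (1 / (2 * α)) := by field_simp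
  linarith

theorem Real.one_add_sq_div_two_le_cosh (x : ℝ) : 1 + x ^ 2 / 2 ≤ Real.cosh x := by
  have h : |x / 2| ≤ |Real.sinh (x / 2)| := by
    rcases le_total 0 (x / 2) with hx | hx
    · rw [abs_of_nonneg hx, abs_of_nonneg (Real.sinh_nonneg_iff.2 hx)]
      exact Real.self_le_sinh_iff.2 hx
    · rw [abs_of_nonpos hx, abs_of_nonpos (Real.sinh_nonpos_iff.2 hx)]
      exact neg_le_neg (Real.sinh_le_self_iff.2 hx)
  have h1 := sq_le_sq.2 h
  have h2 := Real.cosh_two_mul (x / 2)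
  rw [Real.cosh_sq, mul_div_cancel₀ x two_ne_zero] at h2
  linarith

theorem integral_bergmanMeasure_exp_eq_cosh {α : ℝ} (hα : 1 < α) (c : ℝ) :
    ∫ z : ℂ, Real.exp (c * z.re) ∂(bergmanMeasure α) =
      ∫ z : ℂ, Real.cosh (c * z.re) ∂(bergmanMeasure α) := by
  have h1 : ∫ z : ℂ, Real.exp (-(c * z.re)) ∂(bergmanMeasure α) =
      ∫ z : ℂ, Real.exp (c * z.re) ∂(bergmanMeasure α) := by
    rw [← integral_bergmanMeasure_comp_isometry hα (LinearIsometryEquiv.neg ℝ)]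
    simp
  simp only [Real.cosh_eq]
  rw [integral_div, integral_add (integrable_bergmanMeasure_of_continuous hα (by fun_prop))
    (integrable_bergmanMeasure_of_continuous hα (by fun_prop)), h1]
  ring

theorem one_add_le_integral_bergmanMeasure_exp {α : ℝ} (hα : 1 < α) (c : ℝ) :
    1 + c ^ 2 / (4 * α) ≤ ∫ z : ℂ, Real.exp (c * z.re) ∂(bergmanMeasure α) := by
  have := isProbabilityMeasure_bergmanMeasure hα
  rw [integral_bergmanMeasure_exp_eq_cosh hα]
  have h : ∫ z : ℂ, (1 + c ^ 2 / 2 * z.re ^ 2) ∂(bergmanMeasure α) = 1 + c ^ 2 / (4 * α) := by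
    rw [integral_add (integrable_const _)
      (integrable_bergmanMeasure_of_continuous hα (by fun_prop)), integral_const_mul,
      integral_bergmanMeasure_re_sq hα]
    simp only [integral_const, probReal_univ, smul_eq_mul, mul_one]
    field_simp
    ring
  rw [← h]
  refine integral_mono (integrable_bergmanMeasure_of_continuous hα (by fun_prop))
    (integrable_bergmanMeasure_of_continuous hα (by fun_prop)) fun z => ?_
  have := Real.one_add_sq_div_two_le_cosh (c * z.re)
  simp only
  linarith [mul_pow c z.re 2]

theorem integral_bergmanMeasure_exp_le {α : ℝ} (hα : 1 < α) (c : ℝ) :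
    ∫ z : ℂ, Real.exp (c * z.re) ∂(bergmanMeasure α) ≤
      1 + c ^ 2 / (4 * α) * Real.exp (c ^ 2 / 2) := by
  have := isProbabilityMeasure_bergmanMeasure hα
  rw [integral_bergmanMeasure_exp_eq_cosh hα]
  have h : ∫ z : ℂ, (1 + c ^ 2 / 2 * Real.exp (c ^ 2 / 2) * z.re ^ 2) ∂(bergmanMeasure α) =
      1 + c ^ 2 / (4 * α) * Real.exp (c ^ 2 / 2) := by
    rw [integral_add (integrable_const _)
      (integrable_bergmanMeasure_of_continuous hα (by fun_prop)), integral_const_mul,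
      integral_bergmanMeasure_re_sq hα]
    simp only [integral_const, probReal_univ, smul_eq_mul, mul_one]
    field_simp
    ring
  rw [← h]
  refine integral_mono_ae (integrable_bergmanMeasure_of_continuous hα (by fun_prop))
    (integrable_bergmanMeasure_of_continuous hα (by fun_prop)) ?_
  filter_upwards [ae_bergmanMeasure_mem_ball α] with z hz
  have hz' : ‖z‖ < 1 := by simpa using hz
  have hre : z.re ^ 2 ≤ 1 := by
    rw [sq_le_one_iff_abs_le_one]
    exact (Complex.abs_re_le_norm z).trans hz'.le
  set t := (c * z.re) ^ 2 / 2 with ht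
  have ht' : t = c ^ 2 / 2 * z.re ^ 2 := by rw [ht]; ring
  have htc : t ≤ c ^ 2 / 2 := by
    rw [ht']
    exact mul_le_of_le_one_right (by positivity) hre
  have h1 : Real.exp t ≤ 1 + t * Real.exp t := by
    have h2 := Real.add_one_le_exp (-t)
    have h3 : Real.exp (-t) * Real.exp t = 1 := by rw [← Real.exp_add]; simp
    nlinarith [Real.exp_pos t]
  calc Real.cosh (c * z.re) ≤ Real.exp t := Real.cosh_le_exp_half_sq _
    _ ≤ 1 + t * Real.exp t := h1
    _ ≤ 1 + t * Real.exp (c ^ 2 / 2) := by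
      have : 0 ≤ t := by positivity
      gcongr
    _ = _ := by rw [ht']; ring

theorem lintegral_bergmanMeasure_exp {α : ℝ} (hα : 1 < α) (c : ℝ) :
    ∫⁻ z : ℂ, ENNReal.ofReal (Real.exp (c * z.re)) ∂(bergmanMeasure α) =
      ENNReal.ofReal (∫ z : ℂ, Real.exp (c * z.re) ∂(bergmanMeasure α)) :=
  (ofReal_integral_eq_lintegral_ofReal
    (integrable_bergmanMeasure_of_continuous hα (by fun_prop))
    (Filter.Eventually.of_forall fun _ => (Real.exp_pos _).le)).symm

/-- Testing a contractive inequality on `z ↦ exp (ε z)` and comparing second-order terms. -/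
theorem exponential_test_inequality {α β p q r ε : ℝ} (hα : 1 < α) (hβ : 1 < β) (hp : 0 < p)
    (hq : 0 < q) (hε : 0 < ε)
    (H : (∫⁻ z : ℂ, ENNReal.ofReal (‖Complex.exp (ε * (r * z))‖ ^ q) ∂(bergmanMeasure β))
        ^ (1 / q) ≤
      (∫⁻ z : ℂ, ENNReal.ofReal (‖Complex.exp (ε * z)‖ ^ p) ∂(bergmanMeasure α)) ^ (1 / p)) :
    q * r ^ 2 / (4 * β) / (1 + (q * ε * r) ^ 2 / (4 * β)) ≤
      p / (4 * α) * Real.exp ((p * ε) ^ 2 / 2) := by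
  have hl : ∀ z : ℂ, ‖Complex.exp (ε * (r * z))‖ ^ q = Real.exp (q * ε * r * z.re) := fun z => by
    rw [Complex.norm_exp, ← Real.exp_mul]
    simp
    ring
  have hr : ∀ z : ℂ, ‖Complex.exp (ε * z)‖ ^ p = Real.exp (p * ε * z.re) := fun z => by
    rw [Complex.norm_exp, ← Real.exp_mul]
    simp
    ring
  simp only [hl, hr, lintegral_bergmanMeasure_exp hα, lintegral_bergmanMeasure_exp hβ] at H
  set x := (q * ε * r) ^ 2 / (4 * β) with hx
  set y := (p * ε) ^ 2 / (4 * α) * Real.exp ((p * ε) ^ 2 / 2) with hy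
  have hx0 : 0 ≤ x := by positivity
  have hy0 : 0 ≤ y := by positivity
  have hlow := one_add_le_integral_bergmanMeasure_exp hβ (q * ε * r)
  have hupp := (integral_bergmanMeasure_exp_le hα (p * ε)).trans
    ((add_comm _ _).trans_le (Real.add_one_le_exp y))
  have key : (1 + x) ^ (1 / q) ≤ Real.exp y ^ (1 / p) := by
    rw [← ENNReal.ofReal_le_ofReal_iff (by positivity),
      ← ENNReal.ofReal_rpow_of_nonneg (by positivity) (by positivity),
      ← ENNReal.ofReal_rpow_of_nonneg (by positivity) (by positivity)]
    refine le_trans ?_ (H.trans ?_)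
    · gcongr
    · gcongr
  have hlog := Real.log_le_log (by positivity) key
  rw [Real.log_rpow (by positivity), Real.log_rpow (by positivity), Real.log_exp] at hlog
  have h1 := Real.one_sub_inv_le_log_of_pos (x := 1 + x) (by positivity)
  have h2 : 1 / q * (1 - (1 + x)⁻¹) ≤ 1 / p * y :=
    (mul_le_mul_of_nonneg_left h1 (by positivity)).trans hlog
  have h3 : 1 / q * (1 - (1 + x)⁻¹) = ε ^ 2 * (q * r ^ 2 / (4 * β) / (1 + x)) := by
    have : 1 - (1 + x)⁻¹ = x / (1 + x) := by
      field_simp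
      ring
    rw [this]
    nth_rewrite 1 [hx]
    field_simp
  have h4 : 1 / p * y = ε ^ 2 * (p / (4 * α) * Real.exp ((p * ε) ^ 2 / 2)) := by
    rw [hy]
    field_simp
  rw [h3, h4] at h2
  exact le_of_mul_le_mul_left h2 (by positivity)

/-- Necessity in Theorem 1.1: if `‖T_r f‖_{A_β^q} ≤ ‖f‖_{A_α^p}` for every analytic `f`
on the unit disk, then `r² ≤ βp/(αq)`. -/
theorem hypercontractive_necessity
    (α β p q : ℝ) (hα : 1 < α) (hβ : 1 < β) (hp : 0 < p) (hpq : p ≤ q)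
    (r : ℝ) (hr0 : 0 ≤ r) (hr1 : r < 1)
    (H : ∀ f : ℂ → ℂ, AnalyticOnNhd ℂ f (ball (0 : ℂ) 1) →
      (∫⁻ z, ENNReal.ofReal (‖f ((r : ℂ) * z)‖ ^ q) ∂(bergmanMeasure β)) ^ (1 / q) ≤
        (∫⁻ z, ENNReal.ofReal (‖f z‖ ^ p) ∂(bergmanMeasure α)) ^ (1 / p)) :
    r ^ 2 ≤ β * p / (α * q) := by
  have hq : 0 < q := hp.trans_le hpq
  have hineq : ∀ ε : ℝ, 0 < ε → q * r ^ 2 / (4 * β) / (1 + (q * ε * r) ^ 2 / (4 * β)) ≤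
      p / (4 * α) * Real.exp ((p * ε) ^ 2 / 2) := fun ε hε =>
    exponential_test_inequality hα hβ hp hq hε
      (H (fun z => Complex.exp (ε * z)) fun z _ =>
        (show Differentiable ℂ fun z : ℂ => Complex.exp (ε * z) by fun_prop).analyticAt z)
  have hl : Filter.Tendsto (fun ε : ℝ => q * r ^ 2 / (4 * β) / (1 + (q * ε * r) ^ 2 / (4 * β)))
      (nhdsWithin 0 (Set.Ioi 0)) (nhds (q * r ^ 2 / (4 * β))) := by
    have hc : Continuous fun ε : ℝ =>
        q * r ^ 2 / (4 * β) / (1 + (q * ε * r) ^ 2 / (4 * β)) :=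
      Continuous.div (by fun_prop) (by fun_prop) fun ε => by positivity
    simpa using (hc.tendsto 0).mono_left nhdsWithin_le_nhds
  have hr : Filter.Tendsto (fun ε : ℝ => p / (4 * α) * Real.exp ((p * ε) ^ 2 / 2))
      (nhdsWithin 0 (Set.Ioi 0)) (nhds (p / (4 * α))) := by
    have hc : Continuous fun ε : ℝ => p / (4 * α) * Real.exp ((p * ε) ^ 2 / 2) := by fun_prop
    simpa using (hc.tendsto 0).mono_left nhdsWithin_le_nhds
  have h := le_of_tendsto_of_tendsto hl hr
    (eventually_nhdsWithin_of_forall fun ε hε => hineq ε hε)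
  rw [div_le_div_iff₀ (by positivity) (by positivity)] at h
  rw [le_div_iff₀ (by positivity)]
  linarith
end

section
/- Let $1<\beta\leqslant\beta'<\infty$ and set $r=\sqrt{\beta/\beta'}$. Let $\Phi:[0,1]\to\mathbb{R}$ be twice continuously differentiable with $\Phi''(y)\geqslant 0$ for all $y\in[0,1]$. Then $(\beta-1)\int_0^1(1-y)^{\beta-2}\,\Phi(r^2y)\,dy\;\leqslant\;(\beta'-1)\int_0^1(1-y)^{\beta'-2}\,\Phi(y)\,dy$. -/
open Set intervalIntegral

/-- Integration by parts against the weight `c * (1 - y) ^ (c - 1)` on `[0, 1]`. -/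
lemma integral_one_sub_rpow_mul_eq {c : ℝ} (hc : 0 < c) {f f' : ℝ → ℝ}
    (hf : ∀ y ∈ Icc (0 : ℝ) 1, HasDerivWithinAt f (f' y) (Icc (0 : ℝ) 1) y)
    (hf' : ContinuousOn f' (Icc (0 : ℝ) 1)) :
    c * ∫ y in (0 : ℝ)..1, (1 - y) ^ (c - 1) * f y =
      f 0 + ∫ y in (0 : ℝ)..1, (1 - y) ^ c * f' y := by
  have hfc : ContinuousOn f (Icc (0 : ℝ) 1) := fun y hy => (hf y hy).continuousWithinAt
  have hw : Continuous fun y : ℝ => (1 - y) ^ c :=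
    (continuous_const.sub continuous_id).rpow_const fun _ => Or.inr hc.le
  have hu : uIcc (0 : ℝ) 1 = Icc 0 1 := uIcc_of_le zero_le_one
  have hi₁ : IntervalIntegrable (fun y : ℝ => (1 - y) ^ (c - 1) * f y)
      MeasureTheory.volume 0 1 := by
    have h := (intervalIntegrable_rpow' (a := 0) (b := 1)
      (show -1 < c - 1 by linarith)).comp_sub_left 1
    simp only [sub_zero, sub_self] at h
    exact h.symm.mul_continuousOn (hu ▸ hfc)
  have hi₂ : IntervalIntegrable (fun y : ℝ => (1 - y) ^ c * f' y)
      MeasureTheory.volume 0 1 :=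
    ContinuousOn.intervalIntegrable (hu ▸ hw.continuousOn.mul hf')
  have hftc := integral_eq_sub_of_hasDerivAt_of_le zero_le_one
    (hw.continuousOn.mul hfc)
    (f' := fun y => (1 - y) ^ c * f' y - c * ((1 - y) ^ (c - 1) * f y))
    (fun y hy => by
      have h₁ : HasDerivAt (fun y : ℝ => (1 - y) ^ c) (-1 * c * (1 - y) ^ (c - 1)) y :=
        ((hasDerivAt_id y).const_sub 1).rpow_const (Or.inl (sub_pos.2 hy.2).ne')
      have h₂ := (hf y (Ioo_subset_Icc_self hy)).hasDerivAt (Icc_mem_nhds hy.1 hy.2)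
      exact (h₁.mul h₂).congr_deriv (by ring))
    (hi₂.sub (hi₁.const_mul c))
  rw [integral_sub hi₂ (hi₁.const_mul c), integral_const_mul] at hftc
  simp only [Pi.mul_apply, sub_self, sub_zero, Real.zero_rpow hc.ne', Real.one_rpow] at hftc
  linarith

/-- Second-order Taylor formula with integral remainder for the average of `f` against the
probability density `(b - 1) * (1 - y) ^ (b - 2)` on `[0, 1]`. -/
lemma integral_one_sub_rpow_mul_eq_taylor {b : ℝ} (hb : 1 < b) {f f' f'' : ℝ → ℝ}
    (hf : ∀ y ∈ Icc (0 : ℝ) 1, HasDerivWithinAt f (f' y) (Icc (0 : ℝ) 1) y)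
    (hf' : ∀ y ∈ Icc (0 : ℝ) 1, HasDerivWithinAt f' (f'' y) (Icc (0 : ℝ) 1) y)
    (hf'' : ContinuousOn f'' (Icc (0 : ℝ) 1)) :
    (b - 1) * ∫ y in (0 : ℝ)..1, (1 - y) ^ (b - 2) * f y =
      f 0 + (f' 0 + ∫ y in (0 : ℝ)..1, (1 - y) ^ b * f'' y) / b := by
  have h₁ := integral_one_sub_rpow_mul_eq (sub_pos.2 hb) hf
    fun y hy => (hf' y hy).continuousWithinAt
  have h₂ := integral_one_sub_rpow_mul_eq (zero_lt_one.trans hb) hf' hf''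
  rw [show b - 1 - 1 = b - 2 by ring] at h₁
  rw [h₁, ← h₂, mul_div_cancel_left₀ _ (by linarith)]

/-- A rescaled Bernoulli inequality. -/
lemma one_sub_rpow_le_one_sub_mul_rpow {b s y : ℝ} (hb : 0 ≤ b) (hs : 0 < s) (hs1 : s ≤ 1)
    (hy : y ≤ 1) : (1 - y) ^ b ≤ (1 - s * y) ^ (b / s) := by
  have hy' : 0 ≤ 1 - y := sub_nonneg.2 hy
  have h := rpow_one_add_le_one_add_mul_self (s := -y) (by linarith) hs.le hs1
  rw [← sub_eq_add_neg, mul_neg, ← sub_eq_add_neg] at h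
  calc (1 - y) ^ b = ((1 - y) ^ s) ^ (b / s) := by
        rw [← Real.rpow_mul hy', mul_div_cancel₀ _ hs.ne']
    _ ≤ (1 - s * y) ^ (b / s) :=
        Real.rpow_le_rpow (Real.rpow_nonneg hy' _) h (div_nonneg hb hs.le)

/-- Comparison of the Taylor remainders of `y ↦ f (s * y)` and `f`. -/
lemma mul_integral_one_sub_rpow_comp_mul_le {b s : ℝ} (hb : 0 ≤ b) (hs : 0 < s) (hs1 : s ≤ 1)
    {g : ℝ → ℝ} (hg : ContinuousOn g (Icc (0 : ℝ) 1)) (hg0 : ∀ y ∈ Icc (0 : ℝ) 1, 0 ≤ g y) :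
    s * ∫ y in (0 : ℝ)..1, (1 - y) ^ b * g (s * y) ≤
      ∫ y in (0 : ℝ)..1, (1 - y) ^ (b / s) * g y := by
  have hbs : 0 ≤ b / s := div_nonneg hb hs.le
  have hmaps : MapsTo (s * ·) (Icc (0 : ℝ) 1) (Icc 0 1) := fun y hy =>
    ⟨mul_nonneg hs.le hy.1, mul_le_one₀ hs1 hy.1 hy.2⟩
  have hw : ∀ {p : ℝ}, 0 ≤ p → Continuous fun y : ℝ => (1 - y) ^ p := fun hp =>
    (continuous_const.sub continuous_id).rpow_const fun _ => Or.inr hp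
  have hG : ContinuousOn (fun y : ℝ => (1 - y) ^ (b / s) * g y) (Icc 0 1) :=
    (hw hbs).continuousOn.mul hg
  have hsc : ContinuousOn (s * ·) (Icc (0 : ℝ) 1) := by fun_prop
  have hu : uIcc (0 : ℝ) 1 = Icc 0 1 := uIcc_of_le zero_le_one
  calc s * ∫ y in (0 : ℝ)..1, (1 - y) ^ b * g (s * y)
      ≤ s * ∫ y in (0 : ℝ)..1, (1 - s * y) ^ (b / s) * g (s * y) := by
        refine mul_le_mul_of_nonneg_left (integral_mono_on zero_le_one ?_ ?_ ?_) hs.le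
        · exact ContinuousOn.intervalIntegrable
            (hu ▸ (hw hb).continuousOn.mul (hg.comp hsc hmaps))
        · exact ContinuousOn.intervalIntegrable (hu ▸ hG.comp hsc hmaps)
        · exact fun y hy => mul_le_mul_of_nonneg_right
            (one_sub_rpow_le_one_sub_mul_rpow hb hs hs1 hy.2) (hg0 _ (hmaps hy))
    _ = ∫ y in (0 : ℝ)..s, (1 - y) ^ (b / s) * g y := by
        rw [mul_integral_comp_mul_left (f := fun y : ℝ => (1 - y) ^ (b / s) * g y), mul_zero,
          mul_one]
    _ ≤ ∫ y in (0 : ℝ)..1, (1 - y) ^ (b / s) * g y := by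
        refine integral_mono_interval le_rfl hs.le hs1 ?_
          (ContinuousOn.intervalIntegrable (hu ▸ hG))
        filter_upwards [MeasureTheory.ae_restrict_mem measurableSet_Ioc] with y hy
        exact mul_nonneg (Real.rpow_nonneg (sub_nonneg.2 hy.2) _)
          (hg0 y (Ioc_subset_Icc_self hy))

/-- The key integral inequality in the proof of Theorem 1.1: for `1 < β ≤ β' < ∞`,
`r = √(β/β')`, and `Φ : [0,1] → ℝ` twice continuously differentiable and convex
(`Φ'' ≥ 0`), one has
`(β-1) ∫₀¹ (1-y)^(β-2) Φ(r²y) dy ≤ (β'-1) ∫₀¹ (1-y)^(β'-2) Φ(y) dy`. -/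
theorem weighted_integral_ineq
    (β β' : ℝ) (hβ : 1 < β) (hββ' : β ≤ β')
    (r : ℝ) (hr : r = Real.sqrt (β / β'))
    (Φ Φ' Φ'' : ℝ → ℝ)
    (hΦ' : ∀ y ∈ Icc (0 : ℝ) 1, HasDerivWithinAt Φ (Φ' y) (Icc (0 : ℝ) 1) y)
    (hΦ'' : ∀ y ∈ Icc (0 : ℝ) 1, HasDerivWithinAt Φ' (Φ'' y) (Icc (0 : ℝ) 1) y)
    (hcont : ContinuousOn Φ'' (Icc (0 : ℝ) 1))
    (hconv : ∀ y ∈ Icc (0 : ℝ) 1, 0 ≤ Φ'' y) :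
    (β - 1) * ∫ y in (0 : ℝ)..1, (1 - y) ^ (β - 2) * Φ (r ^ 2 * y) ≤
      (β' - 1) * ∫ y in (0 : ℝ)..1, (1 - y) ^ (β' - 2) * Φ y := by
  have hβ0 : 0 < β := zero_lt_one.trans hβ
  have hβ'0 : 0 < β' := hβ0.trans_le hββ'
  obtain ⟨s, hs⟩ : ∃ s, s = β / β' := ⟨_, rfl⟩
  have hs0 : 0 < s := hs ▸ div_pos hβ0 hβ'0
  have hs1 : s ≤ 1 := hs ▸ (div_le_one hβ'0).2 hββ'
  have hrs : r ^ 2 = s := by rw [hr, ← hs, Real.sq_sqrt hs0.le]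
  have hβs : β / s = β' := by rw [hs]; field_simp
  have hmaps : MapsTo (s * ·) (Icc (0 : ℝ) 1) (Icc 0 1) := fun y hy =>
    ⟨mul_nonneg hs0.le hy.1, mul_le_one₀ hs1 hy.1 hy.2⟩
  have hcomp : ∀ {g g' : ℝ → ℝ},
      (∀ y ∈ Icc (0 : ℝ) 1, HasDerivWithinAt g (g' y) (Icc (0 : ℝ) 1) y) →
      ∀ y ∈ Icc (0 : ℝ) 1,
        HasDerivWithinAt (fun y => g (s * y)) (s * g' (s * y)) (Icc (0 : ℝ) 1) y := by
    intro g g' hg y hy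
    have h : HasDerivWithinAt (s * ·) s (Icc (0 : ℝ) 1) y := by
      simpa using (hasDerivWithinAt_id y (Icc (0 : ℝ) 1)).const_mul s
    rw [mul_comm s (g' _)]
    exact (hg _ (hmaps hy)).comp y h hmaps
  have hsc : ContinuousOn (s * ·) (Icc (0 : ℝ) 1) := by fun_prop
  have hL := integral_one_sub_rpow_mul_eq_taylor hβ (hcomp hΦ')
    (fun y hy => (hcomp hΦ'' y hy).const_mul s)
    (continuousOn_const.mul (continuousOn_const.mul (hcont.comp hsc hmaps)))
  have hR := integral_one_sub_rpow_mul_eq_taylor (hβ.trans_le hββ') hΦ' hΦ'' hcont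
  have hrem := mul_integral_one_sub_rpow_comp_mul_le hβ0.le hs0 hs1 hcont hconv
  rw [hβs] at hrem
  have hfactor : ∫ y in (0 : ℝ)..1, (1 - y) ^ β * (s * (s * Φ'' (s * y))) =
      s * (s * ∫ y in (0 : ℝ)..1, (1 - y) ^ β * Φ'' (s * y)) := by
    rw [← integral_const_mul, ← integral_const_mul]
    congr 1 with y
    ring
  rw [hrs, hL, hR, hfactor, mul_zero, ← mul_add, mul_comm s, mul_div_assoc,
    show s / β = 1 / β' by rw [← hβs]; field_simp, mul_one_div]
  gcongr
end
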